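/- Let q be a prime power, d an even positive integer, and k, n1, n2 integers with k ≥ d, n1 ≥ k, and n2 ≥ k. Then A_q(n1 + n2, d, k) ≥ q^{n1·(k − d/2 + 1)} · A_q(n2, d, k) + A_q(n1, d, k) · (1 + Σ_{r=d/2}^{k−d/2} A_r), where A_r = [k choose r]_q · Σ_{i=0}^{r−d/2} (−1)^i · q^{i(i−1)/2} · [r choose i]_q · (q^{n2·(r − d/2 + 1 − i)} − 1) is the number of codewords of rank r in a linear MRD code in F_q^{k×n2} with minimum rank distance d/2. -/

import Mathlib

open Module

/-- The subspace distance `d_S(U, W) = dim(U + W) − dim(U ∩ W)`. -/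
noncomputable def subspaceDist {F : Type*} [Field F] {n : ℕ}
    (U W : Submodule F (Fin n → F)) : ℕ :=
  finrank F ↥(U ⊔ W) - finrank F ↥(U ⊓ W)

/-- `A_q(n, d, k)`: the maximum size of an `(n, M, d, k)_q` constant dimension code, i.e.
of a set of `k`-dimensional subspaces of `F_q^n` with pairwise subspace distance
at least `d`. -/
noncomputable def maxCDCSize (F : Type*) [Field F] [Fintype F] (n d k : ℕ) : ℕ :=
  sSup {M | ∃ C : Finset (Submodule F (Fin n → F)), C.card = M ∧
    (∀ U ∈ C, finrank F ↥U = k) ∧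
    ∀ U ∈ C, ∀ W ∈ C, U ≠ W → d ≤ subspaceDist U W}

/-- The Gaussian binomial coefficient
`[a choose b]_q = ∏_{j=0}^{b−1} (q^{a−j} − 1)/(q^{b−j} − 1)` for `0 ≤ b ≤ a`,
and `0` otherwise. -/
noncomputable def gaussBinom (q : ℚ) (a b : ℕ) : ℚ :=
  if b ≤ a then ∏ j ∈ Finset.range b, (q ^ (a - j) - 1) / (q ^ (b - j) - 1) else 0

/-!
Let `δ = d / 2`, so that `d`-distant `k`-dimensional subspaces are those meeting in dimension at
most `k - δ`. Represent a codeword of an optimal code in `F_q^{n2}` as the row space of a matrix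
`E`, and form the row spaces of `(A | E)` with `A` in a linear MRD code. Two of them with different
`E` project injectively to distinct codewords, and with equal `E` they meet in a space of
dimension at most `dim ker (A₁ - A₂) ≤ k - δ`. The mirror image uses `(E | B)` with `B` in a linear
MRD code. Subspaces from the two families meet in dimension at most `rank B`, hence the restriction
`rank B ≤ k - δ`.

Gabidulin codes are MRD: a nonzero `q`-polynomial with `K` coefficients has fewer than `q ^ K`
roots. In any linear MRD code, the number of codewords vanishing on a subspace `W` depends only on
`dim W`, so Möbius inversion in the subspace lattice determines the number of codewords of each
rank.
-/

/-! ### Gaussian binomial coefficients -/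

section GaussBinom

variable {q : ℚ}

lemma pow_sub_one_ne_zero (hq : ¬IsOfFinOrder q) {n : ℕ} (hn : n ≠ 0) : q ^ n - 1 ≠ 0 := fun h =>
  hq (isOfFinOrder_iff_pow_eq_one.2 ⟨n, Nat.pos_of_ne_zero hn, sub_eq_zero.1 h⟩)

/-- The unnormalised `q`-factorial `∏_{i=1}^{n} (q^i − 1)`. The missing factor `(q − 1)^n` cancels
in the quotients that express Gaussian binomial coefficients. -/
def qFactorial (q : ℚ) (n : ℕ) : ℚ := ∏ i ∈ Finset.range n, (q ^ (i + 1) - 1)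

lemma qFactorial_succ (q : ℚ) (n : ℕ) :
    qFactorial q (n + 1) = qFactorial q n * (q ^ (n + 1) - 1) :=
  Finset.prod_range_succ _ _

lemma qFactorial_ne_zero (hq : ¬IsOfFinOrder q) (n : ℕ) : qFactorial q n ≠ 0 :=
  Finset.prod_ne_zero_iff.2 fun i _ => pow_sub_one_ne_zero hq i.succ_ne_zero

lemma gaussBinom_zero_right (q : ℚ) (a : ℕ) : gaussBinom q a 0 = 1 := by
  simp [gaussBinom]

lemma gaussBinom_eq_zero_of_lt (q : ℚ) {a b : ℕ} (h : a < b) : gaussBinom q a b = 0 := by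
  simp [gaussBinom, h]

lemma gaussBinom_succ_succ_eq_div_mul (q : ℚ) (a b : ℕ) :
    gaussBinom q (a + 1) (b + 1) =
      (q ^ (a + 1) - 1) / (q ^ (b + 1) - 1) * gaussBinom q a b := by
  by_cases h : b ≤ a
  · simp [gaussBinom, h, Finset.prod_range_succ', mul_comm, div_mul_div_comm]
  · simp [gaussBinom, h]

lemma gaussBinom_add_left (hq : ¬IsOfFinOrder q) (b c : ℕ) :
    gaussBinom q (b + c) b = qFactorial q (b + c) / (qFactorial q b * qFactorial q c) := by
  have hc := qFactorial_ne_zero hq c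
  induction b with
  | zero => simp [gaussBinom_zero_right, qFactorial.eq_def q 0, hc]
  | succ b ih =>
    have hb := qFactorial_ne_zero hq b
    have hb' := pow_sub_one_ne_zero hq b.succ_ne_zero
    rw [Nat.add_right_comm, gaussBinom_succ_succ_eq_div_mul, ih, qFactorial_succ, qFactorial_succ]
    field_simp

lemma gaussBinom_symm (hq : ¬IsOfFinOrder q) {a b : ℕ} (h : b ≤ a) :
    gaussBinom q a (a - b) = gaussBinom q a b := by
  obtain ⟨c, rfl⟩ := Nat.exists_eq_add_of_le h
  rw [Nat.add_sub_cancel_left, gaussBinom_add_left hq, add_comm b c, gaussBinom_add_left hq,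
    mul_comm]

lemma gaussBinom_self (hq : ¬IsOfFinOrder q) (a : ℕ) : gaussBinom q a a = 1 := by
  rw [← gaussBinom_symm hq le_rfl, Nat.sub_self, gaussBinom_zero_right]

lemma gaussBinom_mul_gaussBinom (hq : ¬IsOfFinOrder q) (a u i : ℕ) :
    gaussBinom q a (u + i) * gaussBinom q (u + i) u =
      gaussBinom q a u * gaussBinom q (a - u) i := by
  by_cases h : u + i ≤ a
  · obtain ⟨c, rfl⟩ := Nat.exists_eq_add_of_le h
    have hu := qFactorial_ne_zero hq u
    have hi := qFactorial_ne_zero hq i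
    have hc := qFactorial_ne_zero hq c
    have hui := qFactorial_ne_zero hq (u + i)
    have hic := qFactorial_ne_zero hq (i + c)
    rw [gaussBinom_add_left hq, gaussBinom_add_left hq, Nat.add_assoc, Nat.add_sub_cancel_left,
      gaussBinom_add_left hq, gaussBinom_add_left hq]
    field_simp
  · rw [gaussBinom_eq_zero_of_lt q (not_le.1 h), zero_mul]
    by_cases hu : u ≤ a
    · rw [gaussBinom_eq_zero_of_lt q (show a - u < i by omega), mul_zero]
    · rw [gaussBinom_eq_zero_of_lt q (not_le.1 hu), zero_mul]

lemma gaussBinom_succ_succ (hq : ¬IsOfFinOrder q) (a b : ℕ) :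
    gaussBinom q (a + 1) (b + 1) = q ^ (b + 1) * gaussBinom q a (b + 1) + gaussBinom q a b := by
  rcases lt_trichotomy a b with h | rfl | h
  · simp [gaussBinom_eq_zero_of_lt q h, gaussBinom_eq_zero_of_lt q (Nat.lt_succ_of_lt h),
      gaussBinom_eq_zero_of_lt q (Nat.succ_lt_succ h)]
  · simp [gaussBinom_self hq, gaussBinom_eq_zero_of_lt q (Nat.lt_succ_self a)]
  · obtain ⟨c, rfl⟩ := Nat.exists_eq_add_of_le (Nat.succ_le_of_lt h)
    have hb := qFactorial_ne_zero hq b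
    have hc := qFactorial_ne_zero hq c
    have hb' := pow_sub_one_ne_zero hq b.succ_ne_zero
    have hc' := pow_sub_one_ne_zero hq c.succ_ne_zero
    rw [gaussBinom_succ_succ_eq_div_mul, gaussBinom_add_left hq,
      show b.succ + c = b + (c + 1) by omega, gaussBinom_add_left hq, qFactorial_succ q b,
      qFactorial_succ q c]
    field_simp
    ring

lemma sum_range_alternating_gaussBinom_succ (hq : ¬IsOfFinOrder q) (m N : ℕ) :
    ∑ i ∈ Finset.range (N + 1), (-1) ^ i * q ^ i.choose 2 * gaussBinom q (m + 1) i =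
      (-1) ^ N * q ^ (N + 1).choose 2 * gaussBinom q m N := by
  induction N with
  | zero => simp [gaussBinom_zero_right]
  | succ N ih =>
    rw [Finset.sum_range_succ, ih, gaussBinom_succ_succ hq, Nat.choose_succ_succ' (N + 1) 1,
      Nat.choose_one_right]
    ring

lemma sum_range_alternating_gaussBinom (hq : ¬IsOfFinOrder q) {m N : ℕ} (h : m ≤ N) :
    ∑ i ∈ Finset.range (N + 1), (-1) ^ i * q ^ i.choose 2 * gaussBinom q m i =
      if m = 0 then 1 else 0 := by
  rcases m with _ | m
  · rw [Finset.sum_range_succ', Finset.sum_eq_zero fun i _ => by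
      rw [gaussBinom_eq_zero_of_lt q i.succ_pos, mul_zero]]
    simp [gaussBinom_zero_right]
  · simp [sum_range_alternating_gaussBinom_succ hq, gaussBinom_eq_zero_of_lt q h]

lemma sum_alternating_gaussBinom_mul_gaussBinom (hq : ¬IsOfFinOrder q) {j u N : ℕ}
    (h : j ≤ u + N) :
    ∑ i ∈ Finset.range (N + 1),
        (-1) ^ i * q ^ i.choose 2 * gaussBinom q (u + i) u * gaussBinom q j (u + i) =
      if j = u then 1 else 0 := by
  calc ∑ i ∈ Finset.range (N + 1),
        (-1) ^ i * q ^ i.choose 2 * gaussBinom q (u + i) u * gaussBinom q j (u + i)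
      = gaussBinom q j u *
          ∑ i ∈ Finset.range (N + 1), (-1) ^ i * q ^ i.choose 2 * gaussBinom q (j - u) i := by
        rw [Finset.mul_sum]
        refine Finset.sum_congr rfl fun i _ => ?_
        linear_combination ((-1) ^ i * q ^ i.choose 2) * gaussBinom_mul_gaussBinom hq j u i
    _ = if j = u then 1 else 0 := by
        rw [sum_range_alternating_gaussBinom hq (by omega)]
        rcases lt_trichotomy j u with h | rfl | h
        · simp [gaussBinom_eq_zero_of_lt q h, h.ne]
        · simp [gaussBinom_self hq]
        · simp [Nat.sub_ne_zero_of_lt h, h.ne']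

end GaussBinom

/-! ### Counting subspaces -/

section Subspaces

variable {F V : Type*} [Field F] [AddCommGroup V] [Module F V]

/-- The linearly independent families of length `w = dim W` that span `W` are the linearly
independent families of length `w` in `W`. Counting both sides counts the `w`-dimensional
subspaces. -/
def spanningFamiliesEquiv [FiniteDimensional F V] {w : ℕ}
    (W : {W : Submodule F V // finrank F W = w}) :
    {s : {s : Fin w → V // LinearIndependent F s} // Submodule.span F (Set.range s.1) = W.1} ≃
      {t : Fin w → W.1 // LinearIndependent F t} where
  toFun s := ⟨fun i => ⟨s.1.1 i, s.2.le (Submodule.subset_span ⟨i, rfl⟩)⟩,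
    LinearIndependent.of_comp W.1.subtype s.1.2⟩
  invFun t :=
    have ht : LinearIndependent F fun i => (t.1 i : V) := t.2.map' W.1.subtype W.1.ker_subtype
    ⟨⟨fun i => t.1 i, ht⟩, Submodule.eq_of_le_of_finrank_eq
      (Submodule.span_le.2 (Set.range_subset_iff.2 fun i => (t.1 i).2))
      (by rw [finrank_span_eq_card ht, Fintype.card_fin, W.2])⟩
  left_inv _ := rfl
  right_inv _ := rfl

/-- A linearly independent family of length `w` in `V` is a `w`-dimensional subspace, its span,
together with a linearly independent family of length `w` in that subspace. -/
def sigmaLinearIndependentEquiv [FiniteDimensional F V] (w : ℕ) :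
    (Σ W : {W : Submodule F V // finrank F W = w}, {t : Fin w → W.1 // LinearIndependent F t}) ≃
      {s : Fin w → V // LinearIndependent F s} :=
  (Equiv.sigmaCongrRight fun W =>
    ((Equiv.subtypeEquivRight fun _ => Subtype.ext_iff).trans (spanningFamiliesEquiv W)).symm).trans
  (Equiv.sigmaFiberEquiv fun s =>
    ⟨Submodule.span F (Set.range s.1), by rw [finrank_span_eq_card s.2, Fintype.card_fin]⟩)

variable [Fintype F] [FiniteDimensional F V]

lemma not_isOfFinOrder_natCast_card (F : Type*) [Field F] [Fintype F] :
    ¬IsOfFinOrder (Fintype.card F : ℚ) := by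
  have hq : (1 : ℚ) < Fintype.card F := by exact_mod_cast Fintype.one_lt_card
  intro h
  obtain ⟨n, hn, hpow⟩ := isOfFinOrder_iff_pow_eq_one.1 h
  exact (one_lt_pow₀ hq hn.ne').ne' hpow

lemma natCard_linearIndependent {w : ℕ} (hw : w ≤ finrank F V) :
    (Nat.card {s : Fin w → V // LinearIndependent F s} : ℚ) =
      ∏ j ∈ Finset.range w,
        (Fintype.card F : ℚ) ^ j * ((Fintype.card F : ℚ) ^ (finrank F V - j) - 1) := by
  have := Module.finite_of_finite F (M := V)
  have := Fintype.ofFinite V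
  rw [card_linearIndependent hw, Finset.prod_range, Nat.cast_prod]
  refine Finset.prod_congr rfl fun j _ => ?_
  have hj : (j : ℕ) ≤ finrank F V := j.2.le.trans hw
  rw [Nat.cast_sub (Nat.pow_le_pow_right Fintype.card_pos hj), mul_sub, ← pow_add,
    Nat.add_sub_cancel' hj]
  simp

lemma natCard_submodule_finrank_eq (w : ℕ) :
    (Nat.card {W : Submodule F V // finrank F W = w} : ℚ) =
      gaussBinom (Fintype.card F) (finrank F V) w := by
  have := Module.finite_of_finite F (M := V)
  by_cases hw : w ≤ finrank F V
  · have := Fintype.ofFinite {W : Submodule F V // finrank F W = w}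
    have hcount := congrArg (Nat.cast (R := ℚ))
      (Nat.card_congr (sigmaLinearIndependentEquiv (F := F) (V := V) w))
    rw [Nat.card_sigma, natCard_linearIndependent hw, Nat.cast_sum,
      Finset.sum_congr rfl fun W _ => by rw [natCard_linearIndependent W.2.ge, W.2],
      Finset.sum_const, nsmul_eq_mul, Finset.card_univ, ← Nat.card_eq_fintype_card] at hcount
    have hpow (j : ℕ) : (Fintype.card F : ℚ) ^ j ≠ 0 := by positivity
    have hne : ∏ j ∈ Finset.range w,
        (Fintype.card F : ℚ) ^ j * ((Fintype.card F : ℚ) ^ (w - j) - 1) ≠ 0 :=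
      Finset.prod_ne_zero_iff.2 fun j hj => mul_ne_zero (hpow j) <|
        pow_sub_one_ne_zero (not_isOfFinOrder_natCast_card F)
          (Nat.sub_ne_zero_of_lt (Finset.mem_range.1 hj))
    rw [eq_div_of_mul_eq hne hcount, ← Finset.prod_div_distrib, gaussBinom, if_pos hw]
    exact Finset.prod_congr rfl fun j _ => mul_div_mul_left _ _ (hpow j)
  · have : IsEmpty {W : Submodule F V // finrank F W = w} :=
      ⟨fun W => hw (W.2 ▸ Submodule.finrank_le W.1)⟩
    simp [gaussBinom_eq_zero_of_lt _ (not_le.1 hw)]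

lemma natCard_submodule_le_finrank_eq (K : Submodule F V) (w : ℕ) :
    (Nat.card {W : {W : Submodule F V // finrank F W = w} // W.1 ≤ K} : ℚ) =
      gaussBinom (Fintype.card F) (finrank F K) w := by
  rw [← natCard_submodule_finrank_eq]
  refine congrArg Nat.cast (Nat.card_congr ?_)
  calc {W : {W : Submodule F V // finrank F W = w} // W.1 ≤ K}
      ≃ {W : Submodule F V // finrank F W = w ∧ W ≤ K} :=
      Equiv.subtypeSubtypeEquivSubtypeInter _ (· ≤ K)
    _ ≃ {W : Submodule F V // W ≤ K ∧ finrank F W = w} := .subtypeEquivRight fun _ => and_comm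
    _ ≃ {W : Set.Iic K // finrank F W.1 = w} :=
      (Equiv.subtypeSubtypeEquivSubtypeInter _ fun W : Submodule F V => finrank F W = w).symm
    _ ≃ {U : Submodule F K // finrank F U = w} :=
      (K.mapIic.toEquiv.subtypeEquiv fun U => by
        rw [← Submodule.finrank_map_subtype_eq K U]; rfl).symm

lemma sum_gaussBinom_finrank {M : Type*} [Fintype M] {N : M → Submodule F V} {c : ℕ → ℕ}
    (hN : ∀ W : Submodule F V, Nat.card {a // W ≤ N a} = c (finrank F W)) (w : ℕ) :
    ∑ a, gaussBinom (Fintype.card F) (finrank F (N a)) w =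
      gaussBinom (Fintype.card F) (finrank F V) w * c w := by
  have := Module.finite_of_finite F (M := V)
  let S := {W : Submodule F V // finrank F W = w}
  have := Fintype.ofFinite S
  let swap : (Σ a, {W : S // W.1 ≤ N a}) ≃ (Σ W : S, {a // W.1 ≤ N a}) :=
    { toFun := fun x => ⟨x.2.1, x.1, x.2.2⟩
      invFun := fun x => ⟨x.2.1, x.1, x.2.2⟩
      left_inv := fun _ => rfl
      right_inv := fun _ => rfl }
  calc ∑ a, gaussBinom (Fintype.card F) (finrank F (N a)) w
      = (Nat.card (Σ a, {W : S // W.1 ≤ N a}) : ℚ) := by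
        simp only [Nat.card_sigma, Nat.cast_sum, S, natCard_submodule_le_finrank_eq]
    _ = (Nat.card (Σ W : S, {a // W.1 ≤ N a}) : ℚ) := by rw [Nat.card_congr swap]
    _ = Nat.card S * c w := by
        have hS (W : S) : Nat.card {a // W.1 ≤ N a} = c w := by rw [hN, W.2]
        simp only [Nat.card_sigma, hS, Finset.sum_const, Finset.card_univ,
          Nat.card_eq_fintype_card, smul_eq_mul, Nat.cast_mul]
    _ = gaussBinom (Fintype.card F) (finrank F V) w * c w := by
        rw [natCard_submodule_finrank_eq]

/-- Möbius inversion in the lattice of subspaces. -/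
lemma natCard_finrank_eq_sum {M : Type*} [Finite M] {N : M → Submodule F V} {c : ℕ → ℕ}
    (hN : ∀ W : Submodule F V, Nat.card {a // W ≤ N a} = c (finrank F W)) {u m : ℕ}
    (hV : finrank F V = u + m) :
    (Nat.card {a // finrank F (N a) = u} : ℚ) =
      ∑ i ∈ Finset.range (m + 1), (-1) ^ i * (Fintype.card F : ℚ) ^ i.choose 2 *
        gaussBinom (Fintype.card F) (u + i) u *
          (gaussBinom (Fintype.card F) (u + m) (u + i) * c (u + i)) := by
  have := Fintype.ofFinite M
  set q := (Fintype.card F : ℚ)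
  calc (Nat.card {a // finrank F (N a) = u} : ℚ)
      = ∑ a, if finrank F (N a) = u then 1 else 0 := by
        simp [Nat.card_eq_fintype_card, Fintype.card_subtype]
    _ = ∑ a, ∑ i ∈ Finset.range (m + 1), (-1) ^ i * q ^ i.choose 2 *
          gaussBinom q (u + i) u * gaussBinom q (finrank F (N a)) (u + i) :=
        Finset.sum_congr rfl fun a _ => .symm <|
          sum_alternating_gaussBinom_mul_gaussBinom (not_isOfFinOrder_natCast_card F)
            ((Submodule.finrank_le (N a)).trans_eq hV)
    _ = ∑ i ∈ Finset.range (m + 1), (-1) ^ i * q ^ i.choose 2 * gaussBinom q (u + i) u *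
          (gaussBinom q (u + m) (u + i) * c (u + i)) := by
        rw [Finset.sum_comm]
        simp only [← Finset.mul_sum, q, sum_gaussBinom_finrank hN, hV]

end Subspaces

/-! ### Linear MRD codes -/

section MRD

variable {F X Y : Type*} [Field F] [AddCommGroup X] [Module F X] [AddCommGroup Y] [Module F Y]

lemma exists_ge_finrank_eq [FiniteDimensional F X] (W : Submodule F X) {m : ℕ}
    (hWm : finrank F W ≤ m) (hm : m ≤ finrank F X) :
    ∃ W' : Submodule F X, W ≤ W' ∧ finrank F W' = m := by
  induction m, hWm using Nat.le_induction with
  | base => exact ⟨W, le_rfl, rfl⟩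
  | succ m _ ih =>
    obtain ⟨U, hWU, hU⟩ := ih (Nat.le_of_succ_le hm)
    obtain ⟨v, hv⟩ := U.exists_of_finrank_lt (hU.trans_lt hm)
    have hvU : v ∉ U := by simpa using hv 1 one_ne_zero
    exact ⟨U ⊔ Submodule.span F {v}, hWU.trans le_sup_left,
      by rw [Submodule.finrank_sup_span_singleton hvU, hU]⟩

/-- `C` is a linear maximum rank distance code with minimum rank distance `δ`: a subspace of
`Hom(X, Y)` whose nonzero elements have rank at least `δ` and whose dimension attains the
Singleton bound for `dim X ≤ dim Y`. The matrix space `F_q^{k×n}` is encoded as `Hom(X, Y)` with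
`k = dim X` and `n = dim Y`. -/
structure IsLinearMRDCode (δ : ℕ) (C : Submodule F (X →ₗ[F] Y)) : Prop where
  pos : 0 < δ
  le_finrank : δ ≤ finrank F X
  finrank_eq : finrank F C = finrank F Y * (finrank F X - δ + 1)
  le_finrank_range : ∀ f ∈ C, f ≠ 0 → δ ≤ finrank F (LinearMap.range f)

/-- The restriction of the maps in `C` to the subspace `W`. -/
def restrictCode (C : Submodule F (X →ₗ[F] Y)) (W : Submodule F X) : C →ₗ[F] W →ₗ[F] Y :=
  LinearMap.lcomp F Y W.subtype ∘ₗ C.subtype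

lemma mem_ker_restrictCode {C : Submodule F (X →ₗ[F] Y)} {W : Submodule F X} {f : C} :
    f ∈ LinearMap.ker (restrictCode C W) ↔ W ≤ LinearMap.ker f.1 := by
  simp [restrictCode, LinearMap.ext_iff, SetLike.le_def]

namespace IsLinearMRDCode

variable {δ : ℕ} {C : Submodule F (X →ₗ[F] Y)}

lemma le_finrank_range_sub (hC : IsLinearMRDCode δ C) {f g : C} (hfg : f ≠ g) :
    δ ≤ finrank F (LinearMap.range (f.1 - g.1)) :=
  hC.le_finrank_range _ (C.sub_mem f.2 g.2) fun h => hfg (Subtype.ext (sub_eq_zero.1 h))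

lemma map_congrRight {Z : Type*} [AddCommGroup Z] [Module F Z]
    (hC : IsLinearMRDCode δ C) (e : Y ≃ₗ[F] Z) :
    IsLinearMRDCode δ (C.map (e.congrRight (M := X)).toLinearMap) where
  pos := hC.pos
  le_finrank := hC.le_finrank
  finrank_eq := by rw [LinearEquiv.finrank_map_eq, hC.finrank_eq, e.finrank_eq]
  le_finrank_range := by
    rintro _ ⟨f, hf, rfl⟩ hne
    have hrange := hC.le_finrank_range f hf fun h => hne (by simp [h])
    rwa [← LinearEquiv.finrank_map_eq e, ← LinearMap.range_comp] at hrange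

lemma restrictCode_injective [FiniteDimensional F X] (hC : IsLinearMRDCode δ C) {W : Submodule F X}
    (hW : finrank F X - δ < finrank F W) : Function.Injective (restrictCode C W) := by
  rw [injective_iff_map_eq_zero]
  intro f hf
  by_contra hne
  have hrank := hC.le_finrank_range f f.2 fun h => hne (Subtype.ext h)
  have hker := Submodule.finrank_mono (mem_ker_restrictCode.1 (LinearMap.mem_ker.2 hf))
  have := f.1.finrank_range_add_finrank_ker
  omega

variable [FiniteDimensional F X] [FiniteDimensional F Y]

/-- Restriction to a subspace of dimension `dim X - δ + 1` is injective between spaces of the same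
dimension, hence bijective, and restriction to `W` factors through it. -/
lemma restrictCode_surjective (hC : IsLinearMRDCode δ C) {W : Submodule F X}
    (hW : finrank F W ≤ finrank F X - δ + 1) : Function.Surjective (restrictCode C W) := by
  have hδ := hC.pos
  have hδX := hC.le_finrank
  obtain ⟨W', hWW', hW'⟩ := exists_ge_finrank_eq W hW (by omega)
  have hsurj : Function.Surjective (restrictCode C W') := by
    refine (LinearMap.injective_iff_surjective_of_finrank_eq_finrank ?_).1
      (hC.restrictCode_injective (by omega))
    rw [hC.finrank_eq, finrank_linearMap, hW', mul_comm]
  intro g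
  obtain ⟨g', hg'⟩ := g.exists_extend
  obtain ⟨f, hf⟩ := hsurj (g' ∘ₗ W'.subtype)
  refine ⟨f, LinearMap.ext fun w => ?_⟩
  exact (LinearMap.congr_fun hf ⟨w, hWW' w.2⟩).trans (LinearMap.congr_fun hg' w)

lemma finrank_ker_restrictCode (hC : IsLinearMRDCode δ C) (W : Submodule F X) :
    finrank F (LinearMap.ker (restrictCode C W)) =
      finrank F Y * (finrank F X - δ + 1 - finrank F W) := by
  rcases le_or_gt (finrank F W) (finrank F X - δ + 1) with hW | hW
  · have hrange := (restrictCode C W).finrank_range_add_finrank_ker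
    rw [LinearMap.range_eq_top.2 (hC.restrictCode_surjective hW), finrank_top, finrank_linearMap,
      hC.finrank_eq, mul_comm (finrank F W)] at hrange
    rw [Nat.mul_sub]
    omega
  · rw [LinearMap.ker_eq_bot.2 (hC.restrictCode_injective (by omega)), finrank_bot,
      Nat.sub_eq_zero_of_le hW.le, mul_zero]

lemma natCard_le_ker [Fintype F] (hC : IsLinearMRDCode δ C) (W : Submodule F X) :
    Nat.card {f : C // W ≤ LinearMap.ker f.1} =
      Fintype.card F ^ (finrank F Y * (finrank F X - δ + 1 - finrank F W)) := by
  rw [← hC.finrank_ker_restrictCode, ← Nat.card_eq_fintype_card,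
    ← Module.natCard_eq_pow_finrank (K := F) (V := LinearMap.ker (restrictCode C W))]
  exact Nat.card_congr (Equiv.subtypeEquivRight fun f => mem_ker_restrictCode.symm)

end IsLinearMRDCode

/-- Delsarte's number of codewords of rank `r` in a linear MRD code in `F_q^{k×n}` with minimum
rank distance `δ`, valid for `δ ≤ r ≤ k`. -/
noncomputable def mrdRankCount (q : ℚ) (k n δ r : ℕ) : ℚ :=
  gaussBinom q k r * ∑ i ∈ Finset.range (r - δ + 1),
    (-1) ^ i * q ^ i.choose 2 * gaussBinom q r i * (q ^ (n * (r - δ + 1 - i)) - 1)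

/-- The summands with `r - δ < i` vanish, and the alternating sum of the `-1`s is zero. -/
lemma mrdRankCount_eq_sum {q : ℚ} (hq : ¬IsOfFinOrder q) (k n : ℕ) {δ r : ℕ} (hr : 0 < r) :
    mrdRankCount q k n δ r = gaussBinom q k r * ∑ i ∈ Finset.range (r + 1),
      (-1) ^ i * q ^ i.choose 2 * gaussBinom q r i * q ^ (n * (r - δ + 1 - i)) := by
  have halt := sum_range_alternating_gaussBinom hq (le_refl r)
  rw [if_neg hr.ne'] at halt
  rw [mrdRankCount, Finset.sum_subset (Finset.range_mono (by omega : r - δ + 1 ≤ r + 1))]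
  · simp only [mul_sub, Finset.sum_sub_distrib, mul_one, halt, sub_zero]
  · intro i _ hi
    rw [Finset.mem_range, not_lt] at hi
    simp [Nat.sub_eq_zero_of_le hi]

namespace IsLinearMRDCode

variable [Fintype F] [FiniteDimensional F X] [FiniteDimensional F Y] {δ : ℕ}
  {C : Submodule F (X →ₗ[F] Y)}

theorem natCard_finrank_range_eq (hC : IsLinearMRDCode δ C) {r : ℕ} (hδr : δ ≤ r)
    (hr : r ≤ finrank F X) :
    (Nat.card {f : C // finrank F (LinearMap.range f.1) = r} : ℚ) =
      mrdRankCount (Fintype.card F) (finrank F X) (finrank F Y) δ r := by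
  have := Module.finite_of_finite F (M := C)
  have hq := not_isOfFinOrder_natCast_card F
  obtain ⟨u, hu⟩ := Nat.exists_eq_add_of_le' hr
  have hker (f : C) :
      finrank F (LinearMap.range f.1) = r ↔ finrank F (LinearMap.ker f.1) = u := by
    have := f.1.finrank_range_add_finrank_ker
    omega
  simp only [hker]
  rw [natCard_finrank_eq_sum
      (c := fun w => Fintype.card F ^ (finrank F Y * (finrank F X - δ + 1 - w)))
      hC.natCard_le_ker hu, mrdRankCount_eq_sum hq _ _ (hC.pos.trans_le hδr),
    hu, Finset.mul_sum]
  refine Finset.sum_congr rfl fun i _ => ?_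
  have hmul := gaussBinom_mul_gaussBinom hq (u + r) u i
  have hsymm := gaussBinom_symm hq (Nat.le_add_left r u)
  rw [Nat.add_sub_cancel] at hsymm
  rw [hsymm, Nat.add_sub_cancel_left] at hmul
  rw [show u + r - δ + 1 - (u + i) = r - δ + 1 - i by omega, Nat.cast_pow]
  linear_combination ((-1) ^ i * (Fintype.card F : ℚ) ^ i.choose 2 *
    (Fintype.card F : ℚ) ^ (finrank F Y * (r - δ + 1 - i))) * hmul

theorem natCard_finrank_range_le (hC : IsLinearMRDCode δ C) {s : ℕ} (hs : s ≤ finrank F X) :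
    (Nat.card {f : C // finrank F (LinearMap.range f.1) ≤ s} : ℚ) =
      1 + ∑ r ∈ Finset.Icc δ s,
        mrdRankCount (Fintype.card F) (finrank F X) (finrank F Y) δ r := by
  have := Module.finite_of_finite F (M := C)
  have := Fintype.ofFinite C
  let rank (f : C) : ℕ := finrank F (LinearMap.range f.1)
  have hrank_zero (f : C) : rank f = 0 ↔ f = 0 := by
    simp only [rank, Submodule.finrank_eq_zero, LinearMap.range_eq_bot, Submodule.coe_eq_zero]
  let S : Finset C := {f | rank f ≤ s}
  have hmaps : Set.MapsTo rank S (insert 0 (Finset.Icc δ s) : Finset ℕ) := by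
    intro f hf
    rw [Finset.mem_coe, Finset.mem_insert, Finset.mem_Icc, hrank_zero, or_iff_not_imp_left]
    exact fun hf0 => ⟨hC.le_finrank_range f f.2 fun h => hf0 (Subtype.ext h),
      (Finset.mem_filter.1 hf).2⟩
  have hfibre {r : ℕ} (hr : r ≤ s) : {f ∈ S | rank f = r} = ({f | rank f = r} : Finset C) := by
    ext f
    simp only [S, Finset.mem_filter, Finset.mem_univ, true_and]
    omega
  have hfibre_zero : ({f | rank f = 0} : Finset C) = {0} := by
    ext f
    simp [hrank_zero]
  rw [Nat.card_eq_fintype_card, Fintype.card_subtype, Finset.card_eq_sum_card_fiberwise hmaps,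
    Finset.sum_insert (by simp [hC.pos.ne']), hfibre s.zero_le, hfibre_zero, Finset.card_singleton,
    Nat.cast_add, Nat.cast_one, Nat.cast_sum]
  refine congrArg (1 + ·) (Finset.sum_congr rfl fun r hr => ?_)
  obtain ⟨hδr, hrs⟩ := Finset.mem_Icc.1 hr
  rw [hfibre hrs, ← hC.natCard_finrank_range_eq hδr (hrs.trans hs), Nat.card_eq_fintype_card,
    Fintype.card_subtype]

end IsLinearMRDCode

end MRD

/-! ### Gabidulin codes -/

section Gabidulin

open Polynomial in
/-- The `q`-polynomial `∑ i, a i * X ^ (q ^ i)` with coefficient vector `a`. -/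
noncomputable def linearizedPolynomial {L : Type*} [Semiring L] (q : ℕ) {K : ℕ} (a : Fin K → L) :
    L[X] :=
  ∑ i, C (a i) * X ^ q ^ (i : ℕ)

lemma coeff_linearizedPolynomial {L : Type*} [Semiring L] {q : ℕ} (hq : 1 < q) {K : ℕ}
    (a : Fin K → L) (j : Fin K) : (linearizedPolynomial q a).coeff (q ^ (j : ℕ)) = a j := by
  simp [linearizedPolynomial, Polynomial.coeff_X_pow, Nat.pow_right_inj hq, Fin.val_inj]

lemma natDegree_linearizedPolynomial_le {L : Type*} [Semiring L] {q : ℕ} (hq : 0 < q) {K : ℕ}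
    (a : Fin K → L) : (linearizedPolynomial q a).natDegree ≤ q ^ (K - 1) :=
  Polynomial.natDegree_sum_le_of_forall_le _ _ fun i _ =>
    (Polynomial.natDegree_C_mul_X_pow_le _ _).trans
      (Nat.pow_le_pow_right hq (Nat.le_sub_one_of_lt i.2))

variable (F L : Type*) [Field F] [Fintype F] [Field L] [Algebra F L]

/-- The `F`-linear endomorphism of `L` given by evaluating the `q`-polynomial with coefficient
vector `a`, `q = |F|`, as a linear function of `a`. -/
noncomputable def linearizedMap (K : ℕ) : (Fin K → L) →ₗ[F] L →ₗ[F] L :=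
  LinearMap.mk₂ F (fun a x => ∑ i, a i * (FiniteField.frobeniusAlgHom F L ^ (i : ℕ)) x)
    (fun a b x => by simp only [Pi.add_apply, add_mul, Finset.sum_add_distrib])
    (fun c a x => by simp only [Pi.smul_apply, smul_mul_assoc, Finset.smul_sum])
    (fun a x y => by simp only [map_add, mul_add, Finset.sum_add_distrib])
    (fun c a x => by simp only [map_smul, mul_smul_comm, Finset.smul_sum])

variable {F L}

lemma linearizedMap_apply {K : ℕ} (a : Fin K → L) (x : L) :
    linearizedMap F L K a x = (linearizedPolynomial (Fintype.card F) a).eval x := by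
  simp [linearizedMap, linearizedPolynomial, Polynomial.eval_finsetSum, AlgHom.coe_pow,
    FiniteField.coe_frobeniusAlgHom, pow_iterate]

lemma finrank_ker_linearizedMap_lt {K : ℕ} {a : Fin K → L} (ha : a ≠ 0) :
    finrank F (LinearMap.ker (linearizedMap F L K a)) < K := by
  obtain ⟨j, hj⟩ := Function.ne_iff.1 ha
  have hq : 1 < Fintype.card F := Fintype.one_lt_card
  set P := linearizedPolynomial (Fintype.card F) a
  have hP : P ≠ 0 := fun h => hj <| by
    rw [← coeff_linearizedPolynomial hq a j]
    exact congrArg (Polynomial.coeff · (Fintype.card F ^ (j : ℕ))) h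
  have hker : (LinearMap.ker (linearizedMap F L K a) : Set L) = P.rootSet L := by
    ext x
    simp [Polynomial.mem_rootSet, hP, linearizedMap_apply, P]
  have : Finite (LinearMap.ker (linearizedMap F L K a)) :=
    (hker ▸ P.rootSet_finite L : (LinearMap.ker (linearizedMap F L K a) : Set L).Finite)
  have hle :=
    calc Fintype.card F ^ finrank F (LinearMap.ker (linearizedMap F L K a))
        = (P.rootSet L).ncard := by
          rw [← hker, ← Nat.card_coe_set_eq, ← Nat.card_eq_fintype_card]
          exact (Module.natCard_eq_pow_finrank (K := F)).symm
      _ ≤ P.natDegree := Polynomial.ncard_rootSet_le P L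
      _ ≤ Fintype.card F ^ (K - 1) :=
          natDegree_linearizedPolynomial_le (zero_lt_one.trans hq) a
  exact (Nat.le_sub_one_iff_lt j.pos).1 ((Nat.pow_le_pow_iff_right hq).1 hle)

variable {X : Type*} [AddCommGroup X] [Module F X]

/-- The Gabidulin code of `q`-polynomials with `K` coefficients, viewed as linear maps on `X`
through `g : X →ₗ[F] L`. For injective `g`, the images of a basis of `X` are the usual linearly
independent evaluation points. -/
noncomputable def gabidulinCode (K : ℕ) (g : X →ₗ[F] L) : Submodule F (X →ₗ[F] L) :=
  LinearMap.range ((linearizedMap F L K).compl₂ g)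

variable [FiniteDimensional F L]

lemma finrank_ker_linearizedMap_comp_lt {K : ℕ} {g : X →ₗ[F] L} (hg : Function.Injective g)
    {a : Fin K → L} (ha : a ≠ 0) :
    finrank F (LinearMap.ker (linearizedMap F L K a ∘ₗ g)) < K :=
  (LinearMap.finrank_le_finrank_of_injective (f := g.restrict fun _ hx => hx) fun _ _ h =>
    Subtype.ext (hg (congrArg Subtype.val h))).trans_lt (finrank_ker_linearizedMap_lt ha)

theorem isLinearMRDCode_gabidulinCode [FiniteDimensional F X] {δ : ℕ} (hδ : 0 < δ)
    (hδX : δ ≤ finrank F X) {g : X →ₗ[F] L} (hg : Function.Injective g) :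
    IsLinearMRDCode δ (gabidulinCode (finrank F X - δ + 1) g) where
  pos := hδ
  le_finrank := hδX
  finrank_eq := by
    rw [gabidulinCode, LinearMap.finrank_range_of_inj, finrank_pi_fintype]
    · simp [mul_comm]
    · rw [injective_iff_map_eq_zero]
      intro a ha
      by_contra hne
      have := finrank_ker_linearizedMap_comp_lt hg hne
      rw [show linearizedMap F L _ a ∘ₗ g = 0 from ha, LinearMap.ker_zero, finrank_top] at this
      omega
  le_finrank_range := by
    rintro _ ⟨a, rfl⟩ hne
    have hker := finrank_ker_linearizedMap_comp_lt (a := a) hg fun h => hne (by simp [h])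
    have := (linearizedMap F L _ a ∘ₗ g).finrank_range_add_finrank_ker
    rw [show (linearizedMap F L _).compl₂ g a = linearizedMap F L _ a ∘ₗ g from rfl]
    omega

end Gabidulin

theorem exists_isLinearMRDCode {F X Y : Type*} [Field F] [Finite F] [AddCommGroup X] [Module F X]
    [FiniteDimensional F X] [AddCommGroup Y] [Module F Y] [FiniteDimensional F Y] {δ : ℕ}
    (hδ : 0 < δ) (hδX : δ ≤ finrank F X) (hXY : finrank F X ≤ finrank F Y) :
    ∃ C : Submodule F (X →ₗ[F] Y), IsLinearMRDCode δ C := by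
  have := Fintype.ofFinite F
  obtain ⟨p, hp⟩ := CharP.exists F
  have : Fact p.Prime := ⟨CharP.char_is_prime F p⟩
  have : NeZero (finrank F Y) := ⟨by omega⟩
  let L := FiniteField.Extension F p (finrank F Y)
  have hL : finrank F L = finrank F Y := FiniteField.finrank_extension F p _
  have : FiniteDimensional F L := .of_finrank_pos (by omega)
  obtain ⟨g, hg⟩ := finrank_le_iff_exists_linearMap.1 (hXY.trans hL.ge)
  exact ⟨_, (isLinearMRDCode_gabidulinCode hδ hδX hg).map_congrRight (.ofFinrankEq L Y hL)⟩

/-! ### Constant dimension codes -/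

section CDC

variable {F V V' ι κ : Type*} [Field F] [AddCommGroup V] [Module F V] [AddCommGroup V']
  [Module F V'] {δ k : ℕ}

lemma two_mul_le_subspaceDist_iff {n : ℕ} {U W : Submodule F (Fin n → F)}
    (hU : finrank F U = k) (hW : finrank F W = k) :
    2 * δ ≤ subspaceDist U W ↔ finrank F ↥(U ⊓ W) + δ ≤ k := by
  have hsum := Submodule.finrank_sup_add_finrank_inf_eq U W
  have hinf := Submodule.finrank_mono (inf_le_left : U ⊓ W ≤ U)
  rw [subspaceDist]
  omega

lemma isGreatest_maxCDCSize (F : Type*) [Field F] [Fintype F] (n d k : ℕ) :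
    IsGreatest {M | ∃ C : Finset (Submodule F (Fin n → F)), C.card = M ∧
      (∀ U ∈ C, finrank F U = k) ∧ ∀ U ∈ C, ∀ W ∈ C, U ≠ W → d ≤ subspaceDist U W}
      (maxCDCSize F n d k) := by
  have := Fintype.ofFinite (Submodule F (Fin n → F))
  suffices hbdd : BddAbove _ from
    ⟨Nat.sSup_mem ⟨0, ∅, by simp⟩ hbdd, fun _ hM => le_csSup hbdd hM⟩
  refine ⟨Fintype.card (Submodule F (Fin n → F)), ?_⟩
  rintro _ ⟨C, rfl, -⟩
  exact C.card_le_univ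

/-- An indexed constant dimension code in an arbitrary vector space: the subspaces `S i` have
dimension `k`, and distinct indices give subspace distance at least `2 * δ`, expressed through the
dimension of the intersection. -/
structure IsCDCFamily (δ k : ℕ) (S : ι → Submodule F V) : Prop where
  finrank_eq : ∀ i, finrank F (S i) = k
  finrank_inf_add_le : ∀ ⦃i j⦄, i ≠ j → finrank F ↥(S i ⊓ S j) + δ ≤ k

namespace IsCDCFamily

lemma exists_fin_maxCDCSize (F : Type*) [Field F] [Fintype F] (n δ k : ℕ) :
    ∃ S : Fin (maxCDCSize F n (2 * δ) k) → Submodule F (Fin n → F), IsCDCFamily δ k S := by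
  obtain ⟨C, hC, hk, hdist⟩ := (isGreatest_maxCDCSize F n (2 * δ) k).1
  let e := C.equivFinOfCardEq hC
  refine ⟨fun i => e.symm i, fun i => hk _ (e.symm i).2, fun i j hij => ?_⟩
  exact (two_mul_le_subspaceDist_iff (hk _ (e.symm i).2) (hk _ (e.symm j).2)).1
    (hdist _ (e.symm i).2 _ (e.symm j).2 fun h => hij (e.symm.injective (Subtype.ext h)))

lemma map_equiv {S : ι → Submodule F V} (hS : IsCDCFamily δ k S) (e : V ≃ₗ[F] V') :
    IsCDCFamily δ k fun i => (S i).map e.toLinearMap where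
  finrank_eq i := by rw [LinearEquiv.finrank_map_eq, hS.finrank_eq]
  finrank_inf_add_le i j hij := by
    rw [← Submodule.map_inf _ e.injective, LinearEquiv.finrank_map_eq]
    exact hS.finrank_inf_add_le hij

lemma injective {S : ι → Submodule F V} (hS : IsCDCFamily δ k S) (hδ : 0 < δ) :
    Function.Injective S := by
  intro i j hij
  by_contra hne
  have := hS.finrank_inf_add_le hne
  rw [← hij, inf_idem, hS.finrank_eq] at this
  omega

theorem natCard_le_maxCDCSize [Fintype F] [FiniteDimensional F V] {S : ι → Submodule F V}
    (hS : IsCDCFamily δ k S) (hδ : 0 < δ) :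
    Nat.card ι ≤ maxCDCSize F (finrank F V) (2 * δ) k := by
  let e : V ≃ₗ[F] (Fin (finrank F V) → F) := .ofFinrankEq _ _ (finrank_fin_fun F).symm
  have hS' := hS.map_equiv e
  have hinj := hS'.injective hδ
  have := Finite.of_injective _ hinj
  have := Fintype.ofFinite ι
  refine (isGreatest_maxCDCSize F _ _ _).2
    ⟨Finset.univ.map ⟨_, hinj⟩, by simp [Nat.card_eq_fintype_card], ?_, ?_⟩
  · simpa using hS'.finrank_eq
  · simp only [Finset.mem_map, Finset.mem_univ, true_and, Function.Embedding.coeFn_mk,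
      forall_exists_index, forall_apply_eq_imp_iff]
    exact fun i j hij => (two_mul_le_subspaceDist_iff (hS'.finrank_eq i) (hS'.finrank_eq j)).2
      (hS'.finrank_inf_add_le fun h => hij (by rw [h]))

lemma sumElim {S : ι → Submodule F V} {T : κ → Submodule F V} (hS : IsCDCFamily δ k S)
    (hT : IsCDCFamily δ k T) (hST : ∀ i j, finrank F ↥(S i ⊓ T j) + δ ≤ k) :
    IsCDCFamily δ k (Sum.elim S T) where
  finrank_eq := Sum.rec hS.finrank_eq hT.finrank_eq
  finrank_inf_add_le := by
    rintro (i | i) (j | j) hij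
    · exact hS.finrank_inf_add_le fun h => hij (congrArg Sum.inl h)
    · exact hST i j
    · exact inf_comm (S j) (T i) ▸ hST j i
    · exact hT.finrank_inf_add_le fun h => hij (congrArg Sum.inr h)

end IsCDCFamily

end CDC

/-! ### Linkage -/

section Linkage

variable {F V X Y Z : Type*} [Field F] [AddCommGroup V] [Module F V] [AddCommGroup X] [Module F X]
  [AddCommGroup Y] [Module F Y] [AddCommGroup Z] [Module F Z]

lemma finrank_range_inf_range_le_of_injective_comp [FiniteDimensional F Y] (π : V →ₗ[F] Y)
    {p p' : X →ₗ[F] V} (hp : Function.Injective (π ∘ₗ p)) :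
    finrank F ↥(LinearMap.range p ⊓ LinearMap.range p') ≤
      finrank F ↥(LinearMap.range (π ∘ₗ p) ⊓ LinearMap.range (π ∘ₗ p')) := by
  refine LinearMap.finrank_le_finrank_of_injective (f := π.restrict ?_) ?_
  · rintro _ ⟨⟨x, rfl⟩, ⟨y, hy⟩⟩
    exact ⟨⟨x, rfl⟩, ⟨y, congrArg π hy⟩⟩
  · rintro ⟨_, ⟨x, rfl⟩, hx⟩ ⟨_, ⟨y, rfl⟩, hy⟩ h
    exact Subtype.ext (congrArg p (hp (congrArg Subtype.val h)))

lemma finrank_range_prod_inf_range_prod_le_finrank_ker_sub [FiniteDimensional F X]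
    (f g : X →ₗ[F] Y) {e : X →ₗ[F] Z} (he : Function.Injective e) :
    finrank F ↥(LinearMap.range (f.prod e) ⊓ LinearMap.range (g.prod e)) ≤
      finrank F (LinearMap.ker (f - g)) := by
  have hle : LinearMap.range (f.prod e) ⊓ LinearMap.range (g.prod e) ≤
      (LinearMap.ker (f - g)).map (f.prod e) := by
    rintro _ ⟨⟨x, rfl⟩, ⟨y, hy⟩⟩
    obtain rfl : y = x := he (congrArg Prod.snd hy)
    exact ⟨y, by simpa [sub_eq_zero] using (congrArg Prod.fst hy).symm, rfl⟩
  exact (Submodule.finrank_mono hle).trans (Submodule.finrank_map_le _ _)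

variable [FiniteDimensional F X] {δ : ℕ} {A B ι κ : Type*}

namespace IsCDCFamily

lemma injective_of_range {e : ι → X →ₗ[F] V}
    (he : IsCDCFamily δ (finrank F X) fun i => LinearMap.range (e i)) (i : ι) :
    Function.Injective (e i) := by
  have hrange := (e i).finrank_range_add_finrank_ker
  rw [he.finrank_eq i, Nat.add_eq_left, Submodule.finrank_eq_zero] at hrange
  exact LinearMap.ker_eq_bot.1 hrange

lemma exists_range_eq [FiniteDimensional F V] {S : ι → Submodule F V}
    (hS : IsCDCFamily δ (finrank F X) S) :
    ∃ e : ι → X →ₗ[F] V, ∀ i, LinearMap.range (e i) = S i := by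
  let e i : X ≃ₗ[F] S i := .ofFinrankEq _ _ (hS.finrank_eq i).symm
  refine ⟨fun i => (S i).subtype ∘ₗ (e i).toLinearMap, fun i => ?_⟩
  rw [LinearMap.range_comp, LinearEquiv.range, Submodule.map_top, Submodule.range_subtype]

theorem linkage [FiniteDimensional F Z] {φ : A → X →ₗ[F] Y} {e : ι → X →ₗ[F] Z}
    (hφ : Pairwise fun a b => δ ≤ finrank F (LinearMap.range (φ a - φ b)))
    (he : IsCDCFamily δ (finrank F X) fun i => LinearMap.range (e i)) :
    IsCDCFamily δ (finrank F X) fun x : A × ι => LinearMap.range ((φ x.1).prod (e x.2)) where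
  finrank_eq x := LinearMap.finrank_range_of_inj fun _ _ h =>
    he.injective_of_range x.2 (congrArg Prod.snd h)
  finrank_inf_add_le := by
    rintro ⟨a, i⟩ ⟨b, j⟩ hne
    rcases eq_or_ne i j with rfl | hij
    · have hinf := finrank_range_prod_inf_range_prod_le_finrank_ker_sub (φ a) (φ b)
        (he.injective_of_range i)
      have hrank := hφ fun h : a = b => hne (by rw [h])
      have := (φ a - φ b).finrank_range_add_finrank_ker
      dsimp only at hrank ⊢
      omega
    · exact (Nat.add_le_add_right (finrank_range_inf_range_le_of_injective_comp
        (LinearMap.snd F Y Z) (he.injective_of_range i)) δ).trans (he.finrank_inf_add_le hij)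

/-- A subspace from one block meets a subspace `range (e₁ i, ψ b)` from the other in dimension at
most `rank (ψ b)`, because the projection to `Z` is injective on the former. -/
theorem parallel_linkage [FiniteDimensional F Y] [FiniteDimensional F Z]
    {φ : A → X →ₗ[F] Y} {ψ : B → X →ₗ[F] Z} {e₁ : ι → X →ₗ[F] Y} {e₂ : κ → X →ₗ[F] Z}
    (hφ : Pairwise fun a b => δ ≤ finrank F (LinearMap.range (φ a - φ b)))
    (hψ : Pairwise fun a b => δ ≤ finrank F (LinearMap.range (ψ a - ψ b)))
    (hψ_rank : ∀ b, finrank F (LinearMap.range (ψ b)) + δ ≤ finrank F X)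
    (he₁ : IsCDCFamily δ (finrank F X) fun i => LinearMap.range (e₁ i))
    (he₂ : IsCDCFamily δ (finrank F X) fun j => LinearMap.range (e₂ j)) :
    IsCDCFamily δ (finrank F X) (Sum.elim
      (fun x : A × κ => LinearMap.range ((φ x.1).prod (e₂ x.2)))
      (fun x : B × ι => LinearMap.range ((e₁ x.2).prod (ψ x.1)))) := by
  refine (linkage hφ he₂).sumElim ?_ fun x y => ?_
  · convert (linkage hψ he₁).map_equiv (LinearEquiv.prodComm F Z Y) using 2 with x
    exact LinearMap.range_comp ((ψ x.1).prod (e₁ x.2)) (LinearEquiv.prodComm F Z Y).toLinearMap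
  · have hinf := finrank_range_inf_range_le_of_injective_comp (LinearMap.snd F Y Z)
      (p := (φ x.1).prod (e₂ x.2)) (p' := (e₁ y.2).prod (ψ y.1)) (he₂.injective_of_range x.2)
    exact (Nat.add_le_add_right (hinf.trans (Submodule.finrank_mono inf_le_right)) δ).trans
      (hψ_rank y.1)

end IsCDCFamily

lemma natCard_mul_maxCDCSize_add_le [Fintype F] [Finite A] [Finite B] {n₁ n₂ : ℕ} (hδ : 0 < δ)
    {φ : A → X →ₗ[F] (Fin n₁ → F)} {ψ : B → X →ₗ[F] (Fin n₂ → F)}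
    (hφ : Pairwise fun a b => δ ≤ finrank F (LinearMap.range (φ a - φ b)))
    (hψ : Pairwise fun a b => δ ≤ finrank F (LinearMap.range (ψ a - ψ b)))
    (hψ_rank : ∀ b, finrank F (LinearMap.range (ψ b)) + δ ≤ finrank F X) :
    Nat.card A * maxCDCSize F n₂ (2 * δ) (finrank F X) +
        maxCDCSize F n₁ (2 * δ) (finrank F X) * Nat.card B ≤
      maxCDCSize F (n₁ + n₂) (2 * δ) (finrank F X) := by
  obtain ⟨S₁, hS₁⟩ := IsCDCFamily.exists_fin_maxCDCSize F n₁ δ (finrank F X)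
  obtain ⟨S₂, hS₂⟩ := IsCDCFamily.exists_fin_maxCDCSize F n₂ δ (finrank F X)
  obtain ⟨e₁, he₁⟩ := hS₁.exists_range_eq
  obtain ⟨e₂, he₂⟩ := hS₂.exists_range_eq
  rw [← funext he₁] at hS₁
  rw [← funext he₂] at hS₂
  simpa [Nat.card_sum, Nat.card_prod, mul_comm] using
    (IsCDCFamily.parallel_linkage hφ hψ hψ_rank hS₁ hS₂).natCard_le_maxCDCSize hδ

end Linkage

/-! ### The bound -/

theorem two_parallel_linkage_lower_bound_general (F : Type*) [Field F] [Fintype F]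
    {d k n1 n2 : ℕ} (hd : 0 < d) (hdeven : Even d) (hdk : d ≤ 2 * k) (hn1 : k ≤ n1)
    (hn2 : k ≤ n2) :
    ((Fintype.card F : ℚ) ^ (n1 * (k - d / 2 + 1)) * maxCDCSize F n2 d k + maxCDCSize F n1 d k *
        (1 + ∑ r ∈ Finset.Icc (d / 2) (k - d / 2),
          mrdRankCount (Fintype.card F) k n2 (d / 2) r) : ℚ) ≤
      maxCDCSize F (n1 + n2) d k := by
  obtain ⟨δ, rfl⟩ := even_iff_exists_two_mul.1 hdeven
  rw [Nat.mul_div_cancel_left δ two_pos]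
  have hδ : 0 < δ := by omega
  have hδk : δ ≤ k := by omega
  obtain ⟨C₁, hC₁⟩ := exists_isLinearMRDCode (F := F) (X := Fin k → F) (Y := Fin n1 → F) hδ
    (by simpa using hδk) (by simpa using hn1)
  obtain ⟨C₂, hC₂⟩ := exists_isLinearMRDCode (F := F) (X := Fin k → F) (Y := Fin n2 → F) hδ
    (by simpa using hδk) (by simpa using hn2)
  have := Module.finite_of_finite F (M := C₁)
  have := Module.finite_of_finite F (M := C₂)
  have hcard : Nat.card C₁ = Fintype.card F ^ (n1 * (k - δ + 1)) := by
    rw [Module.natCard_eq_pow_finrank (K := F), hC₁.finrank_eq, Nat.card_eq_fintype_card,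
      finrank_fin_fun, finrank_fin_fun]
  have hcount := hC₂.natCard_finrank_range_le (s := k - δ) (by simp)
  have hlink := natCard_mul_maxCDCSize_add_le hδ (φ := fun f : C₁ => f.1)
    (ψ := fun g : {g : C₂ // finrank F (LinearMap.range g.1) ≤ k - δ} => g.1.1)
    (fun _ _ => hC₁.le_finrank_range_sub)
    (fun _ _ h => hC₂.le_finrank_range_sub fun h' => h (Subtype.ext h'))
    (fun g => by simpa using (Nat.le_sub_iff_add_le hδk).1 g.2)
  rw [hcard] at hlink
  simp only [finrank_fin_fun] at hcount hlink
  rw [← hcount]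
  exact_mod_cast hlink

/-- For `k ≥ d`, `n1 ≥ k`, `n2 ≥ k` (`d` even positive, `q` a prime power),
`A_q(n1+n2, d, k) ≥ q^{n1(k−d/2+1)}·A_q(n2, d, k) + A_q(n1, d, k)·(1 + Σ_{r=d/2}^{k−d/2} A_r)`,
where `A_r` is the Delsarte rank-`r` count of a linear MRD code in `F_q^{k×n2}` with
minimum rank distance `d/2`. -/
theorem two_parallel_linkage_lower_bound (q d k n1 n2 : ℕ) (hq : IsPrimePow q)
    (hd : 0 < d) (hdeven : Even d) (hkd : d ≤ k) (hn1 : k ≤ n1) (hn2 : k ≤ n2)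
    (F : Type*) [Field F] [Fintype F] (hcard : Fintype.card F = q) :
    ((q : ℚ) ^ (n1 * (k - d / 2 + 1)) * (maxCDCSize F n2 d k : ℚ) +
        (maxCDCSize F n1 d k : ℚ) *
          (1 + ∑ r ∈ Finset.Icc (d / 2) (k - d / 2),
            gaussBinom q k r *
              ∑ i ∈ Finset.range (r - d / 2 + 1),
                (-1 : ℚ) ^ i * (q : ℚ) ^ (i * (i - 1) / 2) * gaussBinom q r i *
                  ((q : ℚ) ^ (n2 * (r - d / 2 + 1 - i)) - 1))) ≤
      (maxCDCSize F (n1 + n2) d k : ℚ) := by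
  subst hcard
  simpa only [mrdRankCount, Nat.choose_two_right] using
    two_parallel_linkage_lower_bound_general F hd hdeven (by omega) hn1 hn2
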